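/- If p − q ≡ 1 (mod 4), then Cl_{p,q} is a semisimple ℝ-algebra of dimension 2^{p+q} isomorphic to Mat(2^{k−1}, 𝕂) ⊕ Mat(2^{k−1}, 𝕂) with k = q − r_{q−p}, where 𝕂 = ℝ if p − q ≡ 1 (mod 8) and 𝕂 = ℍ if p − q ≡ 5 (mod 8); moreover the two simple direct summands are projected out by the two central idempotents (1 ± e_1 e_2 ⋯ e_{p+q})/2. -/

import Mathlib

noncomputable section

/-- The quadratic form of signature `(p,q)` on `ℝ^(p+q)`. -/
def Qpq (p q : ℕ) : QuadraticForm ℝ (Fin (p + q) → ℝ) :=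
  QuadraticMap.weightedSumSquares ℝ (fun i : Fin (p + q) => if (i : ℕ) < p then (1 : ℝ) else -1)

/-- The real Clifford algebra `Cl_{p,q}`. -/
abbrev Cl (p q : ℕ) : Type := CliffordAlgebra (Qpq p q)

/-- The generators `e i` of `Cl_{p,q}`. -/
def gen (p q : ℕ) (i : Fin (p + q)) : Cl p q :=
  CliffordAlgebra.ι (Qpq p q) (Pi.single i 1)

/-- The unit pseudoscalar `β = e₁e₂⋯e_n` of `Cl_{p,q}`. -/
def pseudoScalar (p q : ℕ) : Cl p q := (List.ofFn (gen p q)).prod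

/-- The values of the Radon–Hurwitz numbers `r_0,…,r_7`. -/
def rhBase : ℕ → ℤ
  | 0 => 0
  | 1 => 1
  | 2 => 2
  | 3 => 2
  | _ => 3

/-- The Radon–Hurwitz number `r_i` (`r_0 = 0`, `r_1 = 1`, `r_2 = r_3 = 2`,
`r_4 = r_5 = r_6 = r_7 = 3`), extended to all integers by `r_{i+8} = r_i + 4`. -/
def radonHurwitz (i : ℤ) : ℤ := 4 * ((i - i % 8) / 8) + rhBase (i % 8).toNat

section Product

variable {A : Type*} [Ring A]

theorem mul_prod_ofFn_of_forall_anti {n : ℕ} (e : Fin n → A) (x : A)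
    (h : ∀ i, x * e i = -(e i * x)) :
    x * (List.ofFn e).prod = (-1) ^ n * ((List.ofFn e).prod * x) := by
  induction n with
  | zero => simp
  | succ n ih =>
    rw [List.ofFn_succ, List.prod_cons, ← mul_assoc, h 0, neg_mul, mul_assoc,
      ih _ fun i => h i.succ, pow_succ]
    rcases neg_one_pow_eq_or A n with hn | hn <;> simp [hn, mul_assoc]

theorem mul_prod_ofFn_of_anti {n : ℕ} (e : Fin n → A)
    (h : ∀ i j, i ≠ j → e i * e j = -(e j * e i)) (i : Fin n) :
    e i * (List.ofFn e).prod = -((-1) ^ n * ((List.ofFn e).prod * e i)) := by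
  induction n with
  | zero => exact i.elim0
  | succ n ih =>
    have hx := mul_prod_ofFn_of_forall_anti (fun i => e i.succ) (e 0)
      fun i => h 0 i.succ (Fin.succ_ne_zero i).symm
    rw [List.ofFn_succ, List.prod_cons, pow_succ]
    refine Fin.cases ?_ (fun j => ?_) i
    · rcases neg_one_pow_eq_or A n with hn | hn <;> rw [hn] at hx ⊢
      · rw [hx]
        simp [← mul_assoc, hx]
      · rw [hx]
        simp [← mul_assoc, hx]
    · rw [← mul_assoc, h j.succ 0 (Fin.succ_ne_zero j), neg_mul, mul_assoc,
        ih (fun i => e i.succ) (fun i j hij => h _ _ (by simpa using hij)) j]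
      rcases neg_one_pow_eq_or A n with hn | hn <;> simp [hn, mul_assoc]

theorem prod_ofFn_mul_self_of_anti [Algebra ℝ A] {n : ℕ} (e : Fin n → A) (s : Fin n → ℝ)
    (hs : ∀ i, e i * e i = algebraMap ℝ A (s i))
    (h : ∀ i j, i ≠ j → e i * e j = -(e j * e i)) :
    (List.ofFn e).prod * (List.ofFn e).prod =
      algebraMap ℝ A ((-1) ^ (∑ i ∈ Finset.range n, i) * ∏ i, s i) := by
  induction n with
  | zero => simp
  | succ n ih =>
    have ih := ih (fun i => e i.succ) (fun i => s i.succ) (fun i => hs _)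
      (fun i j hij => h _ _ (by simpa using hij))
    have hx := mul_prod_ofFn_of_forall_anti (fun i => e i.succ) (e 0)
        fun i => h 0 i.succ (Fin.succ_ne_zero i).symm
    rw [List.ofFn_succ, List.prod_cons, Finset.sum_range_succ, pow_add, Fin.prod_univ_succ]
    set P := (List.ofFn fun i => e i.succ).prod
    have hx' : P * e 0 = (-1) ^ n * (e 0 * P) := by
      rw [hx]
      rcases neg_one_pow_eq_or A n with hn | hn <;> simp [hn]
    calc e 0 * P * (e 0 * P) = e 0 * (P * e 0) * P := by simp only [mul_assoc]
      _ = (-1) ^ n * (e 0 * e 0 * (P * P)) := by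
        rw [hx']
        rcases neg_one_pow_eq_or A n with hn | hn <;> simp [hn, mul_assoc]
      _ = _ := by
        rw [hs, ih, ← map_mul]
        rcases neg_one_pow_eq_or ℝ n with hn | hn
        · have : (-1 : A) ^ n = 1 := by simpa using congrArg (algebraMap ℝ A) hn
          rw [this, hn, one_mul]
          congr 1
          ring
        · have : (-1 : A) ^ n = -1 := by simpa using congrArg (algebraMap ℝ A) hn
          rw [this, hn, neg_one_mul, ← map_neg]
          congr 1
          ring

end Product

/-- A family `e` in a real algebra `A` which generates `A` and whose members anticommute pairwise
and have the prescribed scalar squares `s`. -/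
structure IsCliffordSystem {ι A : Type*} [Ring A] [Algebra ℝ A] (s : ι → ℝ) (e : ι → A) :
    Prop where
  sq : ∀ i, e i * e i = algebraMap ℝ A (s i)
  anti : ∀ i j, i ≠ j → e i * e j = -(e j * e i)
  adjoin : Algebra.adjoin ℝ (Set.range e) = ⊤

namespace IsCliffordSystem

variable {ι κ A B : Type*} [Ring A] [Algebra ℝ A] [Ring B] [Algebra ℝ B]
  {s : ι → ℝ} {e : ι → A}

theorem comp_equiv (h : IsCliffordSystem s e) (σ : κ ≃ ι) :
    IsCliffordSystem (s ∘ σ) (e ∘ σ) where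
  sq i := h.sq (σ i)
  anti i j hij := h.anti _ _ (σ.injective.ne hij)
  adjoin := by rw [σ.surjective.range_comp, h.adjoin]

theorem map_algEquiv (h : IsCliffordSystem s e) (φ : A ≃ₐ[ℝ] B) :
    IsCliffordSystem s (φ ∘ e) where
  sq i := by simp [← map_mul, h.sq]
  anti i j hij := by simp [← map_mul, h.anti i j hij]
  adjoin := by
    have := AlgHom.map_adjoin (φ : A →ₐ[ℝ] B) (Set.range e)
    rw [h.adjoin, Algebra.map_top, (AlgHom.range_eq_top _).2 φ.surjective] at this
    rw [Set.range_comp]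
    exact this.symm

/-- Multiplying four generators of equal square `ε = ± 1` by their product changes the sign of
their squares. -/
theorem swap {ε : ℝ} (hε : ε * ε = 1) {e : ι ⊕ Fin 4 → A}
    (h : IsCliffordSystem (Sum.elim s fun _ => ε) e) :
    ∃ e' : ι ⊕ Fin 4 → A, IsCliffordSystem (Sum.elim s fun _ => -ε) e' := by
  obtain ⟨a, ha⟩ : ∃ a : Fin 4 → A, ∀ i, e (Sum.inr i) = a i :=
    ⟨fun i => e (Sum.inr i), fun _ => rfl⟩
  have hanti : ∀ i j, i ≠ j → a i * a j = -(a j * a i) := fun i j hij => by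
    simpa [ha] using h.anti (Sum.inr i) (Sum.inr j) (by simpa using hij)
  have hsq : ∀ i, a i * a i = algebraMap ℝ A ε := fun i => by simpa [ha] using h.sq (Sum.inr i)
  obtain ⟨w, hw⟩ : ∃ w, w = (List.ofFn a).prod := ⟨_, rfl⟩
  have hww : w * w = 1 := by
    rw [hw, prod_ofFn_mul_self_of_anti a _ hsq hanti]
    simp [Finset.sum_range_succ, show ε ^ 4 = 1 by linear_combination (ε * ε + 1) * hε]
    norm_num
  have haw : ∀ i, a i * w = -(w * a i) := fun i => by
    rw [hw, mul_prod_ofFn_of_anti a hanti i]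
    norm_num
  have hew : ∀ i : ι, e (Sum.inl i) * w = w * e (Sum.inl i) := by
    intro i
    rw [hw, mul_prod_ofFn_of_forall_anti a _ fun j => by rw [← ha, h.anti _ _ (by simp)]]
    norm_num
  have hmul : ∀ i j, a i * w * (a j * w) = -(a i * a j) := by
    intro i j
    rw [haw j, mul_assoc, mul_neg, ← mul_assoc w, hww, one_mul, mul_neg]
  refine ⟨Sum.elim (fun i => e (Sum.inl i)) (fun i => a i * w), ?_, ?_, ?_⟩
  · rintro (i | i)
    · simpa using h.sq (Sum.inl i)
    · simp [hmul, hsq]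
  · rintro (i | i) (j | j) hij
    · exact h.anti _ _ (by simpa using hij)
    · simp only [Sum.elim_inl, Sum.elim_inr]
      rw [← mul_assoc, ← ha, h.anti (Sum.inl i) (Sum.inr j) (by simp), neg_mul, mul_assoc, hew,
        mul_assoc]
    · simp only [Sum.elim_inl, Sum.elim_inr]
      rw [← mul_assoc, ← ha, h.anti (Sum.inl j) (Sum.inr i) (by simp), neg_mul, mul_assoc,
        mul_assoc, hew, neg_neg]
    · simp only [Sum.elim_inr, hmul, hanti i j (by simpa using hij)]
  · set e' : ι ⊕ Fin 4 → A := Sum.elim (fun i => e (Sum.inl i)) (fun i => a i * w) with he'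
    rw [← top_le_iff, ← h.adjoin]
    apply Algebra.adjoin_le
    have hmem : ∀ i, a i * w ∈ Algebra.adjoin ℝ (Set.range e') := fun i =>
      Algebra.subset_adjoin ⟨Sum.inr i, rfl⟩
    have hwmem : w ∈ Algebra.adjoin ℝ (Set.range e') := by
      have : w = a 0 * w * (a 1 * w) * (a 2 * w * (a 3 * w)) := by
        rw [hmul, hmul, hw]; simp [List.ofFn_succ, mul_assoc]
      rw [this]
      exact mul_mem (mul_mem (hmem 0) (hmem 1)) (mul_mem (hmem 2) (hmem 3))
    rintro _ ⟨i | i, rfl⟩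
    · exact Algebra.subset_adjoin ⟨Sum.inl i, rfl⟩
    · have : e (Sum.inr i) = a i * w * w := by rw [mul_assoc, hww, mul_one, ha]
      rw [this]
      exact mul_mem (hmem i) hwmem

open Matrix in
/-- Adjoining a hyperbolic pair of generators replaces an algebra by the `2 × 2` matrices
over it. -/
theorem matrix_two (h : IsCliffordSystem s e) :
    ∃ e' : ι ⊕ Fin 2 → Matrix (Fin 2) (Fin 2) A, IsCliffordSystem (Sum.elim s ![1, -1]) e' := by
  set e' : ι ⊕ Fin 2 → Matrix (Fin 2) (Fin 2) A :=
    Sum.elim (fun i => !![e i, 0; 0, -e i]) ![!![0, 1; 1, 0], !![0, -1; 1, 0]] with he'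
  refine ⟨e', ?_, ?_, ?_⟩
  · rintro (i | i)
    · simp [he', h.sq, Matrix.algebraMap_eq_diagonal, ← Matrix.ext_iff, Fin.forall_fin_two]
    · fin_cases i <;>
      simp [he', ← Matrix.ext_iff, Fin.forall_fin_two]
  · rintro (i | i) (j | j) hij
    · simp [he', h.anti i j (by simpa using hij)]
    · fin_cases j <;> simp [he']
    · fin_cases i <;> simp [he']
    · fin_cases i <;> fin_cases j <;> simp [he'] at hij ⊢
  · set S := Algebra.adjoin ℝ (Set.range e') with hS
    have hu : !![0, 1; 1, 0] ∈ S := Algebra.subset_adjoin ⟨Sum.inr 0, rfl⟩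
    have hv : !![0, -1; 1, 0] ∈ S := Algebra.subset_adjoin ⟨Sum.inr 1, rfl⟩
    have huv : !![1, 0; 0, -1] ∈ S := by simpa using mul_mem hu hv
    have hdiag : ∀ x : A, !![x, 0; 0, x] ∈ S := by
      intro x
      have hx : x ∈ Algebra.adjoin ℝ (Set.range e) := by simp [h.adjoin]
      induction hx using Algebra.adjoin_induction with
      | mem x hx =>
        obtain ⟨i, rfl⟩ := hx
        have : !![e i, 0; 0, -e i] ∈ S := Algebra.subset_adjoin ⟨Sum.inl i, rfl⟩
        simpa using mul_mem this huv
      | algebraMap r =>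
        convert S.algebraMap_mem r using 1
        simp [Matrix.algebraMap_eq_diagonal, ← Matrix.ext_iff, Fin.forall_fin_two]
      | add x y _ _ hx hy => simpa using add_mem hx hy
      | mul x y _ _ hx hy => simpa using mul_mem hx hy
    have hE : !![1, 0; 0, 0] ∈ S := by
      have := S.smul_mem (add_mem (one_mem S) huv) (2⁻¹ : ℝ)
      convert this using 1
      simp [← Matrix.ext_iff, Fin.forall_fin_two, ← add_smul]
      norm_num
    have hF : !![0, 0; 0, 1] ∈ S := by
      have := sub_mem (one_mem S) hE
      convert this using 1
      simp [← Matrix.ext_iff, Fin.forall_fin_two]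
    rw [eq_top_iff]
    intro M _
    have : M = !![M 0 0, 0; 0, M 0 0] * !![1, 0; 0, 0] +
        !![M 0 1, 0; 0, M 0 1] * (!![1, 0; 0, 0] * !![0, 1; 1, 0]) +
        !![M 1 0, 0; 0, M 1 0] * (!![0, 0; 0, 1] * !![0, 1; 1, 0]) +
        !![M 1 1, 0; 0, M 1 1] * !![0, 0; 0, 1] := by
      simp [← Matrix.ext_iff, Fin.forall_fin_two]
    rw [this]
    exact add_mem (add_mem (add_mem (mul_mem (hdiag _) hE) (mul_mem (hdiag _) (mul_mem hE hu)))
      (mul_mem (hdiag _) (mul_mem hF hu))) (mul_mem (hdiag _) hF)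

section Lift

variable {n : ℕ} {s : Fin n → ℝ} {e : Fin n → A}

theorem sum_smul_mul_self (h : IsCliffordSystem s e) (v : Fin n → ℝ) :
    (∑ i, v i • e i) * (∑ i, v i • e i) =
      algebraMap ℝ A (QuadraticMap.weightedSumSquares ℝ s v) := by
  have hpair : ∀ i j, e i * e j + e j * e i = if i = j then algebraMap ℝ A (2 * s i) else 0 := by
    intro i j
    split_ifs with hij
    · subst hij
      rw [h.sq, ← map_add, two_mul]
    · rw [h.anti i j hij, neg_add_cancel]
  have h2 : (2 : ℝ) • ((∑ i, v i • e i) * (∑ i, v i • e i)) =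
      (2 : ℝ) • algebraMap ℝ A (QuadraticMap.weightedSumSquares ℝ s v) := by
    calc (2 : ℝ) • ((∑ i, v i • e i) * (∑ i, v i • e i))
        = ∑ i, ∑ j, (v i * v j) • (e i * e j + e j * e i) := by
          simp only [smul_add, Finset.sum_add_distrib]
          rw [Finset.sum_comm (f := fun i j => (v i * v j) • (e j * e i)), two_smul,
            Finset.sum_mul_sum]
          simp only [smul_mul_smul_comm, mul_comm]
      _ = _ := by
          simp only [hpair, smul_ite, smul_zero, Finset.sum_ite_eq, Finset.mem_univ, if_true,
            QuadraticMap.weightedSumSquares_apply, map_sum, Finset.smul_sum,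
            Algebra.algebraMap_eq_smul_one, smul_smul]
          refine Finset.sum_congr rfl fun i _ => ?_
          congr 1
          simp only [smul_eq_mul]
          ring
  exact smul_right_injective A (two_ne_zero (α := ℝ)) h2

theorem exists_surjective (h : IsCliffordSystem s e) :
    ∃ f : CliffordAlgebra (QuadraticMap.weightedSumSquares ℝ s) →ₐ[ℝ] A,
      Function.Surjective f := by
  let L : (Fin n → ℝ) →ₗ[ℝ] A := Fintype.linearCombination ℝ e
  have hL : ∀ v, L v * L v = algebraMap ℝ A (QuadraticMap.weightedSumSquares ℝ s v) := fun v => by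
    simpa [L, Fintype.linearCombination_apply] using h.sum_smul_mul_self v
  refine ⟨CliffordAlgebra.lift _ ⟨L, hL⟩, ?_⟩
  rw [← AlgHom.range_eq_top, eq_top_iff, ← h.adjoin]
  apply Algebra.adjoin_le
  rintro _ ⟨i, rfl⟩
  exact ⟨CliffordAlgebra.ι _ (Pi.single i 1), by simp [L, Fintype.linearCombination_apply_single]⟩

end Lift

end IsCliffordSystem

/-- `A` is generated by a Clifford system of signature `(p,q)`. -/
def HasCliffordSystem (p q : ℕ) (A : Type*) [Ring A] [Algebra ℝ A] : Prop :=
  ∃ e : Fin p ⊕ Fin q → A, IsCliffordSystem (Sum.elim (fun _ => (1 : ℝ)) (fun _ => -1)) e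

namespace HasCliffordSystem

variable {p q : ℕ} {A B : Type*} [Ring A] [Algebra ℝ A] [Ring B] [Algebra ℝ B]

theorem congr (h : HasCliffordSystem p q A) (φ : A ≃ₐ[ℝ] B) : HasCliffordSystem p q B :=
  let ⟨_, he⟩ := h
  ⟨_, he.map_algEquiv φ⟩

theorem of_equiv {ι : Type*} {s : ι → ℝ} {e : ι → A} (h : IsCliffordSystem s e)
    (σ : Fin p ⊕ Fin q ≃ ι) (hl : ∀ i, s (σ (Sum.inl i)) = 1) (hr : ∀ i, s (σ (Sum.inr i)) = -1) :
    HasCliffordSystem p q A := by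
  refine ⟨e ∘ σ, ?_⟩
  convert h.comp_equiv σ using 1
  ext (i | i) <;> simp [hl, hr]

/-- Splits off the last `r` positive indices. -/
def posEquiv (p q r : ℕ) : Fin (p + r) ⊕ Fin q ≃ (Fin p ⊕ Fin q) ⊕ Fin r :=
  (finSumFinEquiv.symm.sumCongr (.refl _)).trans
    ((Equiv.sumAssoc _ _ _).trans (((Equiv.refl _).sumCongr (Equiv.sumComm _ _)).trans
      (Equiv.sumAssoc _ _ _).symm))

/-- Splits off the last `r` negative indices. -/
def negEquiv (p q r : ℕ) : Fin p ⊕ Fin (q + r) ≃ (Fin p ⊕ Fin q) ⊕ Fin r :=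
  ((Equiv.refl _).sumCongr finSumFinEquiv.symm).trans (Equiv.sumAssoc _ _ _).symm

theorem swap_pos (h : HasCliffordSystem (p + 4) q A) : HasCliffordSystem p (q + 4) A := by
  obtain ⟨e, he⟩ := h
  have h1 := he.comp_equiv (posEquiv p q 4).symm
  have h2 : Sum.elim (fun _ => (1 : ℝ)) (fun _ => -1) ∘ (posEquiv p q 4).symm =
      Sum.elim (Sum.elim (fun _ => (1 : ℝ)) (fun _ => -1)) (fun _ => 1) := by
    ext ((i | i) | i) <;> simp [posEquiv]
  rw [h2] at h1
  obtain ⟨e', he'⟩ := h1.swap (by norm_num)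
  refine of_equiv he' (negEquiv p q 4) (fun i => rfl) (fun i => ?_)
  refine Fin.addCases (fun j => ?_) (fun j => ?_) i <;> simp [negEquiv]

theorem swap_neg (h : HasCliffordSystem p (q + 4) A) : HasCliffordSystem (p + 4) q A := by
  obtain ⟨e, he⟩ := h
  have h1 := he.comp_equiv (negEquiv p q 4).symm
  have h2 : Sum.elim (fun _ => (1 : ℝ)) (fun _ => -1) ∘ (negEquiv p q 4).symm =
      Sum.elim (Sum.elim (fun _ => (1 : ℝ)) (fun _ => -1)) (fun _ => -1) := by
    ext ((i | i) | i) <;> simp [negEquiv]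
  rw [h2] at h1
  obtain ⟨e', he'⟩ := h1.swap (by norm_num)
  refine of_equiv he' (posEquiv p q 4) (fun i => ?_) (fun i => rfl)
  refine Fin.addCases (fun j => ?_) (fun j => ?_) i <;> simp [posEquiv]

theorem matrix_two (h : HasCliffordSystem p q A) :
    HasCliffordSystem (p + 1) (q + 1) (Matrix (Fin 2) (Fin 2) A) := by
  obtain ⟨e, he⟩ := h
  obtain ⟨e', he'⟩ := he.matrix_two
  let σ : Fin (p + 1) ⊕ Fin (q + 1) ≃ (Fin p ⊕ Fin q) ⊕ Fin 2 :=
    (finSumFinEquiv.symm.sumCongr finSumFinEquiv.symm).trans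
      ((Equiv.sumSumSumComm _ _ _ _).trans ((Equiv.refl _).sumCongr finSumFinEquiv))
  refine of_equiv he' σ (fun i => ?_) (fun i => ?_) <;>
  refine Fin.addCases (fun j => ?_) (fun j => ?_) i <;> simp [σ] <;> fin_cases j <;> rfl

theorem matrix_two_pow_succ {n : ℕ}
    (h : HasCliffordSystem p q (Matrix (Fin (2 ^ n)) (Fin (2 ^ n)) A)) :
    HasCliffordSystem (p + 1) (q + 1) (Matrix (Fin (2 ^ (n + 1))) (Fin (2 ^ (n + 1))) A) :=
  h.matrix_two.congr ((Matrix.compAlgEquiv _ _ A ℝ).trans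
    (Matrix.reindexAlgEquiv ℝ A (finProdFinEquiv.trans (finCongr (pow_succ' 2 n).symm))))

/-- The base cases `(p,q) = (1,0)` and `(0,3)` determine all signatures with
`p - q ≡ 1 (mod 4)`. -/
theorem of_base {m : ℕ} {r : ℤ} (hmr : m = 1 ∧ r = 1 ∨ m = 3 ∧ r = 5)
    (base : ∀ p q : ℕ, p + q = m → ((p : ℤ) - q) % 8 = r → HasCliffordSystem p q A) (n : ℕ) :
    ∀ p q : ℕ, p + q = 2 * n + m → ((p : ℤ) - q) % 8 = r →
      HasCliffordSystem p q (Matrix (Fin (2 ^ n)) (Fin (2 ^ n)) A) := by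
  induction n with
  | zero =>
    intro p q hpq hr
    let φ : Matrix (Fin 1) (Fin 1) A ≃ₐ[ℝ] A :=
      { Matrix.uniqueEquiv with
        map_mul' := fun M N => by simp [Matrix.mul_apply]
        map_add' := fun M N => by simp
        commutes' := fun r => by simp [Matrix.algebraMap_eq_diagonal] }
    exact ((base p q (by omega) hr).congr φ.symm).congr
      (Matrix.reindexAlgEquiv ℝ A (finCongr (pow_zero 2).symm))
  | succ n ih =>
    have step : ∀ p q : ℕ, (p + 1) + (q + 1) = 2 * (n + 1) + m →
        (((p + 1 : ℕ) : ℤ) - (q + 1 : ℕ)) % 8 = r →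
        HasCliffordSystem (p + 1) (q + 1) (Matrix (Fin (2 ^ (n + 1))) (Fin (2 ^ (n + 1))) A) :=
      fun p q hpq hr => (ih p q (by omega) (by omega)).matrix_two_pow_succ
    intro p q hpq hr
    rcases p with _ | p
    · obtain ⟨q', rfl⟩ : ∃ q', q = (q' + 1) + 4 := ⟨q - 5, by omega⟩
      exact (step 3 q' (by omega) (by omega)).swap_pos
    · rcases q with _ | q
      · obtain ⟨p', rfl⟩ : ∃ p', p = p' + 4 := ⟨p - 4, by omega⟩
        exact (show HasCliffordSystem (p' + 1) (0 + 4) _ from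
          step p' 3 (by omega) (by omega)).swap_neg
      · exact step p q hpq hr

theorem real_one_zero : HasCliffordSystem 1 0 ℝ := by
  refine ⟨fun _ => 1, ?_, ?_, ?_⟩
  · rintro (i | i)
    · simp
    · exact i.elim0
  · rintro (i | i) (j | j) hij
    · exact absurd (by rw [Subsingleton.elim i j]) hij
    all_goals first | exact i.elim0 | exact j.elim0
  · exact Subsingleton.elim _ _

theorem quaternion_zero_three : HasCliffordSystem 0 3 (Quaternion ℝ) := by
  let u : Fin 3 → Quaternion ℝ := ![⟨0, 1, 0, 0⟩, ⟨0, 0, 1, 0⟩, ⟨0, 0, 0, 1⟩]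
  have hre : ∀ i, (u i).re = 0 := by intro i; fin_cases i <;> rfl
  have hI : ∀ i, (u i).imI = (![1, 0, 0] : Fin 3 → ℝ) i := by intro i; fin_cases i <;> rfl
  have hJ : ∀ i, (u i).imJ = (![0, 1, 0] : Fin 3 → ℝ) i := by intro i; fin_cases i <;> rfl
  have hK : ∀ i, (u i).imK = (![0, 0, 1] : Fin 3 → ℝ) i := by intro i; fin_cases i <;> rfl
  clear_value u
  set e : Fin 0 ⊕ Fin 3 → Quaternion ℝ := Sum.elim Fin.elim0 u with he
  refine ⟨e, ?_, ?_, ?_⟩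
  · rintro (i | i)
    · exact i.elim0
    · rw [Sum.elim_inr, map_neg, map_one]
      fin_cases i <;> ext <;> simp [he, hre, hI, hJ, hK] <;> rfl
  · rintro (i | i) (j | j) hij
    · exact i.elim0
    · exact i.elim0
    · exact j.elim0
    · fin_cases i <;> fin_cases j <;>
        first | exact absurd rfl hij | (ext <;> simp [he, hre, hI, hJ, hK])
  · rw [eq_top_iff]
    intro x _
    have hx : x = algebraMap ℝ _ x.re + x.imI • e (Sum.inr 0) + x.imJ • e (Sum.inr 1) +
        x.imK • e (Sum.inr 2) := by
      ext <;> simp [he, hre, hI, hJ, hK]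
    have hmem : ∀ i, e i ∈ Algebra.adjoin ℝ (Set.range e) := fun i =>
      Algebra.subset_adjoin ⟨i, rfl⟩
    rw [hx]
    exact add_mem (add_mem (add_mem (Subalgebra.algebraMap_mem _ _)
      (Subalgebra.smul_mem _ (hmem _) _)) (Subalgebra.smul_mem _ (hmem _) _))
      (Subalgebra.smul_mem _ (hmem _) _)

theorem exists_surjective (h : HasCliffordSystem p q A) :
    ∃ f : Cl p q →ₐ[ℝ] A, Function.Surjective f := by
  obtain ⟨e, he⟩ := h
  have h1 := he.comp_equiv finSumFinEquiv.symm
  have h2 : Sum.elim (fun _ => (1 : ℝ)) (fun _ => -1) ∘ finSumFinEquiv.symm =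
      fun i : Fin (p + q) => if (i : ℕ) < p then (1 : ℝ) else -1 := by
    ext i
    refine Fin.addCases (fun j => ?_) (fun j => ?_) i <;> simp
  rw [h2] at h1
  exact h1.exists_surjective

end HasCliffordSystem

section PseudoScalar

variable {p q : ℕ}

theorem finrank_Cl (p q : ℕ) : Module.finrank ℝ (Cl p q) = 2 ^ (p + q) := by
  have : Invertible (2 : ℝ) := invertibleOfNonzero two_ne_zero
  rw [(CliffordAlgebra.equivExterior (Qpq p q)).finrank_eq,
    Module.finrank_eq_card_basis (Pi.basisFun ℝ (Fin (p + q))).ExteriorAlgebra]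
  simp

instance Cl.finiteDimensional (p q : ℕ) : FiniteDimensional ℝ (Cl p q) :=
  Module.finite_of_finrank_pos (by rw [finrank_Cl]; positivity)

theorem gen_mul_self (i : Fin (p + q)) :
    gen p q i * gen p q i = algebraMap ℝ _ (if (i : ℕ) < p then 1 else -1) := by
  rw [gen, CliffordAlgebra.ι_sq_scalar]
  congr 1
  rw [Qpq, QuadraticMap.weightedSumSquares_apply, Finset.sum_eq_single i] <;> simp +contextual

theorem gen_mul_gen (i j : Fin (p + q)) (hij : i ≠ j) :
    gen p q i * gen p q j = -(gen p q j * gen p q i) := by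
  refine CliffordAlgebra.ι_mul_ι_comm_of_isOrtho ?_
  rw [QuadraticMap.isOrtho_def]
  simp only [Qpq, QuadraticMap.weightedSumSquares_apply, ← Finset.sum_add_distrib]
  refine Finset.sum_congr rfl fun l _ => ?_
  by_cases hi : l = i
  · subst hi
    simp [hij]
  · simp [hi]

theorem ι_eq_sum_gen (v : Fin (p + q) → ℝ) :
    CliffordAlgebra.ι (Qpq p q) v = ∑ i, v i • gen p q i := by
  simp only [gen, ← map_smul, ← map_sum]
  congr 1
  ext j
  simp [Finset.sum_apply, Pi.single_apply]

theorem pseudoScalar_mem_center (hn : Odd (p + q)) :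
    pseudoScalar p q ∈ Subalgebra.center ℝ (Cl p q) := by
  have hgen : ∀ i, gen p q i * pseudoScalar p q = pseudoScalar p q * gen p q i := fun i => by
    rw [pseudoScalar, mul_prod_ofFn_of_anti _ gen_mul_gen, hn.neg_one_pow, neg_one_mul, neg_neg]
  rw [Subalgebra.mem_center_iff]
  intro x
  induction x using CliffordAlgebra.induction with
  | algebraMap r => exact Algebra.commutes r _
  | ι v => simp [ι_eq_sum_gen, Finset.sum_mul, Finset.mul_sum, hgen]
  | mul x y hx hy => rw [mul_assoc, hy, ← mul_assoc, hx, mul_assoc]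
  | add x y hx hy => rw [add_mul, mul_add, hx, hy]

theorem involute_pseudoScalar (hn : Odd (p + q)) :
    CliffordAlgebra.involute (pseudoScalar p q) = -pseudoScalar p q := by
  have : List.ofFn (gen p q) =
      (List.ofFn fun i : Fin (p + q) => (Pi.single i 1 : Fin (p + q) → ℝ)).map
        (CliffordAlgebra.ι (Qpq p q)) := by
    rw [List.map_ofFn]
    rfl
  rw [pseudoScalar, this, CliffordAlgebra.involute_prod_map_ι]
  simp [hn.neg_one_pow]

theorem pseudoScalar_mul_self (h : ((p : ℤ) - q) % 4 = 1) :
    pseudoScalar p q * pseudoScalar p q = 1 := by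
  rw [pseudoScalar, prod_ofFn_mul_self_of_anti _ _ gen_mul_self gen_mul_gen, Fin.prod_univ_add]
  obtain ⟨m, hm⟩ : ∃ m, p + q = 2 * m + 1 := ⟨(p + q) / 2, by omega⟩
  have hsum : ∑ i ∈ Finset.range (p + q), i = (2 * m + 1) * m := by
    rw [Finset.sum_range_id, hm, Nat.add_sub_cancel, mul_left_comm,
      Nat.mul_div_cancel_left _ two_pos]
  have heven : Even ((2 * m + 1) * m + q) := by
    have : (2 * m + 1) * m + q = 2 * (m * m) + (m + q) := by ring
    rw [this]
    exact (even_two_mul _).add (by rw [Nat.even_iff]; omega)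
  simp [hsum, ← pow_add, heven.neg_one_pow]

end PseudoScalar

instance Quaternion.isCentral_real : Algebra.IsCentral ℝ (Quaternion ℝ) where
  out x hx := by
    rw [Subalgebra.mem_center_iff] at hx
    obtain ⟨i, hi⟩ : ∃ i : Quaternion ℝ, i = ⟨0, 1, 0, 0⟩ := ⟨_, rfl⟩
    obtain ⟨j, hj⟩ : ∃ j : Quaternion ℝ, j = ⟨0, 0, 1, 0⟩ := ⟨_, rfl⟩
    have hi₁ : (i * x).imJ = (x * i).imJ := by rw [hx]
    have hi₂ : (i * x).imK = (x * i).imK := by rw [hx]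
    have hj₁ : (j * x).imK = (x * j).imK := by rw [hx]
    rw [Quaternion.imJ_mul, Quaternion.imJ_mul, hi] at hi₁
    rw [Quaternion.imK_mul, Quaternion.imK_mul, hi] at hi₂
    rw [Quaternion.imK_mul, Quaternion.imK_mul, hj] at hj₁
    simp only [zero_mul, one_mul, mul_zero, mul_one] at hi₁ hi₂ hj₁
    rw [Algebra.mem_bot]
    refine ⟨x.re, ?_⟩
    ext <;> simp <;> linarith

section Splitting

variable {p q : ℕ} {A : Type*} [Ring A] [Algebra ℝ A]

/-- A surjection of `Cl p q` onto a central algebra of half its dimension splits off one of the two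
summands cut out by the pseudoscalar. -/
theorem exists_algEquiv_prod_of_surjective [Algebra.IsCentral ℝ A] [FiniteDimensional ℝ A]
    [Nontrivial A] (h : ((p : ℤ) - q) % 4 = 1) (f : Cl p q →ₐ[ℝ] A) (hf : Function.Surjective f)
    (hdim : 2 * Module.finrank ℝ A = 2 ^ (p + q)) :
    ∃ φ : Cl p q ≃ₐ[ℝ] A × A,
      φ ((2⁻¹ : ℝ) • (1 + pseudoScalar p q)) = (1, 0) ∧
      φ ((2⁻¹ : ℝ) • (1 - pseudoScalar p q)) = (0, 1) := by
  have hn : Odd (p + q) := by rw [Nat.odd_iff]; omega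
  have hinv := involute_pseudoScalar hn
  obtain ⟨g, hg, hg1⟩ : ∃ g : Cl p q →ₐ[ℝ] A, Function.Surjective g ∧ g (pseudoScalar p q) = 1 := by
    have hc : f (pseudoScalar p q) ∈ Subalgebra.center ℝ A := by
      rw [Subalgebra.mem_center_iff]
      intro a
      obtain ⟨x, rfl⟩ := hf a
      rw [← map_mul, ← map_mul, Subalgebra.mem_center_iff.1 (pseudoScalar_mem_center hn) x]
    obtain ⟨r, hr⟩ := Algebra.mem_bot.1 (Algebra.IsCentral.out hc)
    have hrr : r * r = 1 := by
      apply FaithfulSMul.algebraMap_injective ℝ A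
      rw [map_mul, hr, ← map_mul, pseudoScalar_mul_self h, map_one, map_one]
    rcases mul_self_eq_one_iff.1 hrr with rfl | rfl
    · exact ⟨f, hf, by rw [← hr, map_one]⟩
    · refine ⟨f.comp CliffordAlgebra.involute,
        hf.comp CliffordAlgebra.involute_involutive.surjective, ?_⟩
      simp [hinv, ← hr]
  have hhalf : (2⁻¹ : ℝ) • (1 : A) + (2⁻¹ : ℝ) • (1 : A) = 1 := by
    rw [← add_smul, ← two_mul, mul_inv_cancel₀ two_ne_zero, one_smul]
  let φ : Cl p q →ₐ[ℝ] A × A := g.prod (g.comp CliffordAlgebra.involute)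
  have h1 : φ ((2⁻¹ : ℝ) • (1 + pseudoScalar p q)) = (1, 0) := by
    simp [φ, hinv, hg1, hhalf]
  have h2 : φ ((2⁻¹ : ℝ) • (1 - pseudoScalar p q)) = (0, 1) := by
    simp [φ, hinv, hg1, hhalf]
  have hsurj : Function.Surjective φ := by
    rintro ⟨a, b⟩
    obtain ⟨x, rfl⟩ := hg a
    obtain ⟨y, rfl⟩ := (hg.comp CliffordAlgebra.involute_involutive.surjective) b
    refine ⟨x * ((2⁻¹ : ℝ) • (1 + pseudoScalar p q)) +
      y * ((2⁻¹ : ℝ) • (1 - pseudoScalar p q)), ?_⟩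
    rw [map_add, map_mul, map_mul, h1, h2]
    simp [φ]
  have hinj : Function.Injective φ :=
    (LinearMap.injective_iff_surjective_of_finrank_eq_finrank (f := φ.toLinearMap)
      (by rw [finrank_Cl, Module.finrank_prod, ← two_mul, hdim])).2 hsurj
  exact ⟨AlgEquiv.ofBijective φ ⟨hinj, hsurj⟩, h1, h2⟩

end Splitting

theorem exists_algEquiv_real {p q : ℕ} (n : ℕ) (hpq : p + q = 2 * n + 1)
    (h : ((p : ℤ) - q) % 8 = 1) :
    ∃ φ : Cl p q ≃ₐ[ℝ] Matrix (Fin (2 ^ n)) (Fin (2 ^ n)) ℝ × Matrix (Fin (2 ^ n)) (Fin (2 ^ n)) ℝ,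
      φ ((2⁻¹ : ℝ) • (1 + pseudoScalar p q)) = (1, 0) ∧
      φ ((2⁻¹ : ℝ) • (1 - pseudoScalar p q)) = (0, 1) := by
  obtain ⟨f, hf⟩ := (HasCliffordSystem.of_base (A := ℝ) (Or.inl ⟨rfl, rfl⟩) (fun p q hpq hr => by
    obtain ⟨rfl, rfl⟩ : p = 1 ∧ q = 0 := by omega
    exact HasCliffordSystem.real_one_zero) n p q hpq h).exists_surjective
  refine exists_algEquiv_prod_of_surjective (by omega) f hf ?_
  rw [Module.finrank_matrix, hpq]
  simp
  ring

theorem exists_algEquiv_quaternion {p q : ℕ} (n : ℕ) (hpq : p + q = 2 * n + 3)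
    (h : ((p : ℤ) - q) % 8 = 5) :
    ∃ φ : Cl p q ≃ₐ[ℝ] Matrix (Fin (2 ^ n)) (Fin (2 ^ n)) (Quaternion ℝ) ×
        Matrix (Fin (2 ^ n)) (Fin (2 ^ n)) (Quaternion ℝ),
      φ ((2⁻¹ : ℝ) • (1 + pseudoScalar p q)) = (1, 0) ∧
      φ ((2⁻¹ : ℝ) • (1 - pseudoScalar p q)) = (0, 1) := by
  obtain ⟨f, hf⟩ := (HasCliffordSystem.of_base (A := Quaternion ℝ) (Or.inr ⟨rfl, rfl⟩)
    (fun p q hpq hr => by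
      obtain ⟨rfl, rfl⟩ : p = 0 ∧ q = 3 := by omega
      exact HasCliffordSystem.quaternion_zero_three) n p q hpq h).exists_surjective
  refine exists_algEquiv_prod_of_surjective (by omega) f hf ?_
  rw [Module.finrank_matrix, hpq, Quaternion.finrank_eq_four]
  simp
  ring

/-- If `p - q ≡ 1 (mod 4)` then `Cl_{p,q}` is a semisimple algebra of dimension `2^{p+q}`
isomorphic to `Mat(2^{k-1}, 𝕂) ⊕ Mat(2^{k-1}, 𝕂)`, `k = q - r_{q-p}`, where `𝕂 = ℝ` if
`p - q ≡ 1 (mod 8)` and `𝕂 = ℍ` if `p - q ≡ 5 (mod 8)`; the two simple direct summands are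
projected out by the central idempotents `(1 ± e₁⋯e_{p+q})/2`. -/
theorem clifford_semisimple_structure (p q : ℕ) (h : ((p : ℤ) - q) % 4 = 1) :
    IsSemisimpleRing (Cl p q) ∧
    Module.finrank ℝ (Cl p q) = 2 ^ (p + q) ∧
    IsIdempotentElem ((2⁻¹ : ℝ) • (1 + pseudoScalar p q)) ∧
    IsIdempotentElem ((2⁻¹ : ℝ) • (1 - pseudoScalar p q)) ∧
    (2⁻¹ : ℝ) • (1 + pseudoScalar p q) ∈ Subalgebra.center ℝ (Cl p q) ∧
    (2⁻¹ : ℝ) • (1 - pseudoScalar p q) ∈ Subalgebra.center ℝ (Cl p q) ∧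
    (∀ k : ℕ, (k : ℤ) = (q : ℤ) - radonHurwitz ((q : ℤ) - p) →
      (((p : ℤ) - q) % 8 = 1 →
        ∃ φ : Cl p q ≃ₐ[ℝ]
            Matrix (Fin (2 ^ (k - 1))) (Fin (2 ^ (k - 1))) ℝ ×
            Matrix (Fin (2 ^ (k - 1))) (Fin (2 ^ (k - 1))) ℝ,
          φ ((2⁻¹ : ℝ) • (1 + pseudoScalar p q)) = (1, 0) ∧
          φ ((2⁻¹ : ℝ) • (1 - pseudoScalar p q)) = (0, 1)) ∧
      (((p : ℤ) - q) % 8 = 5 →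
        ∃ φ : Cl p q ≃ₐ[ℝ]
            Matrix (Fin (2 ^ (k - 1))) (Fin (2 ^ (k - 1))) (Quaternion ℝ) ×
            Matrix (Fin (2 ^ (k - 1))) (Fin (2 ^ (k - 1))) (Quaternion ℝ),
          φ ((2⁻¹ : ℝ) • (1 + pseudoScalar p q)) = (1, 0) ∧
          φ ((2⁻¹ : ℝ) • (1 - pseudoScalar p q)) = (0, 1))) := by
  have hn : Odd (p + q) := by rw [Nat.odd_iff]; omega
  have hβ := pseudoScalar_mul_self h
  have hc := pseudoScalar_mem_center hn
  refine ⟨?_, finrank_Cl p q, ?_, ?_, ?_, ?_, fun k hk => ⟨fun h8 => ?_, fun h8 => ?_⟩⟩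
  · rcases (by omega : ((p : ℤ) - q) % 8 = 1 ∨ ((p : ℤ) - q) % 8 = 5) with h8 | h8
    · obtain ⟨φ, -⟩ := exists_algEquiv_real ((p + q - 1) / 2) (by omega) h8
      exact φ.symm.toRingEquiv.isSemisimpleRing
    · obtain ⟨φ, -⟩ := exists_algEquiv_quaternion ((p + q - 3) / 2) (by omega) h8
      exact φ.symm.toRingEquiv.isSemisimpleRing
  · rw [IsIdempotentElem, smul_mul_smul_comm, add_mul, mul_add, mul_add, hβ]
    simp only [one_mul, mul_one]
    module
  · rw [IsIdempotentElem, smul_mul_smul_comm, sub_mul, mul_sub, mul_sub, hβ]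
    simp only [one_mul, mul_one]
    module
  · exact Subalgebra.smul_mem _ (add_mem (one_mem _) hc) _
  · exact Subalgebra.smul_mem _ (sub_mem (one_mem _) hc) _
  · refine exists_algEquiv_real (k - 1) ?_ h8
    have h7 : ((q : ℤ) - p) % 8 = 7 := by omega
    simp only [radonHurwitz, h7, show (7 : ℤ).toNat = 7 from rfl, rhBase] at hk
    omega
  · refine exists_algEquiv_quaternion (k - 1) ?_ h8
    have h3 : ((q : ℤ) - p) % 8 = 3 := by omega
    simp only [radonHurwitz, h3, show (3 : ℤ).toNat = 3 from rfl, rhBase] at hk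
    omega

end
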